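/- Let p ≥ 1 and let V : ℤ → ℝ be p-periodic. Let λ_m < λ_n be real numbers such that [λ_m, λ_n] is a connected component of Σ (that is, [λ_m, λ_n] ⊆ Σ and there is ε > 0 with ((λ_m − ε, λ_m) ∪ (λ_n, λ_n + ε)) ∩ Σ = ∅). Suppose Θ̃ : ℂ → ℂ is complex-analytic on ℂ₊ ∪ U for some open set U ⊆ ℂ containing the real interval (λ_m, λ_n), maps ℂ₊ into ℂ₊, satisfies Re Θ̃(z) ∈ [−π, 0] and 2 cos(p Θ̃(z)) = Δ(z) for all z ∈ ℂ₊, and takes real values on (λ_m, λ_n). Then there exists a unique x* ∈ (λ_m, λ_n) with Θ̃''(x*) = 0, and moreover Θ̃'''(x*) ≠ 0. -/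

import Mathlib

/-!
On the band, `Θ''` is strictly increasing and has a zero.

For a point `x` of the band, remove the pole at `x` from the Herglotz function
`-1 / (Θ(z) - Θ(x))`. By the maximum principle the remainder
`1 / (Θ'(x) (z - x)) - 1 / (Θ(z) - Θ(x))` still has nonnegative imaginary part on `ℂ₊`, and it is
not constant, since otherwise `Θ` would be a Möbius map of `ℂ₊` onto itself, whereas `Re Θ ≤ 0`.
The Hopf lemma makes its derivative at `x` positive; this derivative is `1 / (6 Θ'(x))` times the
Schwarzian of `Θ`, so `Θ'''(x) > 0`.

The zero of `Θ''` comes from Rolle's theorem for `1 / Θ' ^ 2 = p² (4 - Δ²) / Δ' ^ 2`, which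
vanishes at both edges of the band as soon as `Δ' ≠ 0` there. In the gaps `|Δ| > 2`, because a
bounded Floquet solution provides a Weyl sequence. Since `Δ` has only real zeros, Laguerre's
inequality `Δ Δ'' < Δ' ^ 2` turns every critical point with `Δ ≠ 0` into a local maximum of `|Δ|`,
and an edge is not one.
-/

open scoped ENNReal Topology

/-- The one-step transfer matrix `[[z - V(n), -1], [1, 0]]`. -/
noncomputable def transferMatrix (V : ℤ → ℝ) (n : ℤ) (z : ℂ) : Matrix (Fin 2) (Fin 2) ℂ :=
  !![z - (V n : ℂ), -1; 1, 0]

/-- The monodromy matrix `Φ(z) = T(p) ⋯ T(1)` of a `p`-periodic potential. -/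
noncomputable def monodromyMatrix (p : ℕ) (V : ℤ → ℝ) (z : ℂ) : Matrix (Fin 2) (Fin 2) ℂ :=
  ((List.range p).map fun i => transferMatrix V ((p : ℤ) - i) z).prod

/-- The Floquet discriminant `Δ(z) = tr Φ(z)`. -/
noncomputable def floquetDiscriminant (p : ℕ) (V : ℤ → ℝ) (z : ℂ) : ℂ :=
  Matrix.trace (monodromyMatrix p V z)

open Filter Set Polynomial

local notation "ℍₒ" => UpperHalfPlane.upperHalfPlaneSet

section BoundaryDerivative

lemma neBot_nhdsWithin_upperHalfPlaneSet (x : ℝ) : (𝓝[ℍₒ] (x : ℂ)).NeBot := by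
  rw [← mem_closure_iff_nhdsWithin_neBot, Complex.closure_setOfPred_lt_im]
  simp

lemma eq_of_eqOn_upperHalfPlaneSet {f g : ℂ → ℂ} {x : ℝ} (hf : ContinuousAt f x)
    (hg : ContinuousAt g x) (hfg : EqOn f g ℍₒ) : f x = g x :=
  haveI := neBot_nhdsWithin_upperHalfPlaneSet x
  tendsto_nhds_unique_of_eventuallyEq (hf.mono_left nhdsWithin_le_nhds)
    (hg.mono_left nhdsWithin_le_nhds) (eventually_nhdsWithin_of_forall hfg)

/-- If the monomial `a ζ ^ n` has nonnegative imaginary part on `ℂ₊`, the sector `n arg ζ < n π`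
must fit into a half-plane. -/
lemma eq_one_and_pos_of_forall_pow_mul_im_nonneg {n : ℕ} {a : ℂ} (hn : n ≠ 0) (ha : a ≠ 0)
    (h : ∀ ζ ∈ ℍₒ, 0 ≤ (ζ ^ n * a).im) : n = 1 ∧ 0 < a.re ∧ a.im = 0 := by
  have hn0 : (0 : ℝ) < n := by positivity
  have hpolar : ∀ s : ℝ, 0 < s → s < n * Real.pi →
      0 ≤ Real.cos s * a.im + Real.sin s * a.re := by
    intro s hs hsn
    have hζ : Complex.exp ((s / n : ℝ) * Complex.I) ∈ ℍₒ := by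
      rw [mem_ofPred_eq, Complex.exp_ofReal_mul_I_im]
      exact Real.sin_pos_of_pos_of_lt_pi (by positivity) (by rwa [div_lt_iff₀' hn0])
    have hs' : (n : ℂ) * ((s / n : ℝ) * Complex.I) = s * Complex.I := by
      push_cast
      field_simp
    have := h _ hζ
    rwa [← Complex.exp_nat_mul, hs', Complex.mul_im, Complex.exp_ofReal_mul_I_im,
      Complex.exp_ofReal_mul_I_re] at this
  have hpi := Real.pi_pos
  obtain rfl : n = 1 := by
    by_contra hne
    have hn2 : (2 : ℝ) ≤ n := by exact_mod_cast (by omega : 2 ≤ n)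
    have hopposite : ∀ s : ℝ, 0 < s → s < Real.pi →
        Real.cos s * a.im + Real.sin s * a.re = 0 := by
      intro s hs hsπ
      have h₁ := hpolar s hs (by nlinarith)
      have h₂ := hpolar (s + Real.pi) (by positivity) (by nlinarith)
      rw [Real.cos_add_pi, Real.sin_add_pi] at h₂
      linarith
    have hre : a.re = 0 := by simpa using hopposite (Real.pi / 2) (by positivity) (by linarith)
    have him : a.im = 0 := by
      simpa [hre] using hopposite (Real.pi / 3) (by positivity) (by linarith)
    exact ha (Complex.ext hre him)
  have hlin : ∀ t : ℝ, 0 ≤ t * a.im + a.re := fun t => by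
    simpa using h (t + Complex.I) (by simp)
  have him : a.im = 0 := by
    by_contra hne
    have := hlin ((-a.re - 1) / a.im)
    rw [div_mul_cancel₀ _ hne] at this
    linarith
  have hre : 0 ≤ a.re := by simpa [him] using hlin 0
  exact ⟨rfl, hre.lt_of_ne fun h0 => ha (Complex.ext h0.symm him), him⟩

lemma forall_pow_mul_im_nonneg_of_eventually {h g : ℂ → ℂ} {x : ℝ} {n : ℕ}
    (hx : (h x).im = 0) (him : ∀ᶠ z in 𝓝[ℍₒ] (x : ℂ), 0 ≤ (h z).im)
    (hg : ContinuousAt g x) (hhg : ∀ᶠ z in 𝓝 (x : ℂ), h z - h x = (z - x) ^ n * g z) :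
    ∀ ζ ∈ ℍₒ, 0 ≤ (ζ ^ n * g x).im := by
  intro ζ hζ
  have hray : Tendsto (fun r : ℝ => (x : ℂ) + r * ζ) (𝓝[>] 0) (𝓝[ℍₒ] x) := by
    refine tendsto_nhdsWithin_iff.2 ⟨?_, ?_⟩
    · have : Continuous fun r : ℝ => (x : ℂ) + r * ζ := by fun_prop
      simpa using (this.tendsto 0).mono_left nhdsWithin_le_nhds
    · filter_upwards [self_mem_nhdsWithin] with r hr
      simpa using mul_pos hr hζ
  have hray' := hray.mono_right nhdsWithin_le_nhds
  have hlim : Tendsto (fun r : ℝ => (ζ ^ n * g (x + r * ζ)).im) (𝓝[>] 0)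
      (𝓝 (ζ ^ n * g x).im) :=
    (Complex.continuous_im.tendsto _).comp ((hg.tendsto.comp hray').const_mul _)
  refine ge_of_tendsto hlim ?_
  filter_upwards [hray.eventually him, hray'.eventually hhg, self_mem_nhdsWithin]
    with r hr_im hr_eq (hr : 0 < r)
  have hscale : (h (x + r * ζ)).im = r ^ n * (ζ ^ n * g (x + r * ζ)).im := by
    rw [← Complex.im_ofReal_mul, Complex.ofReal_pow, ← mul_assoc, ← mul_pow]
    rw [add_sub_cancel_left] at hr_eq
    rw [← hr_eq, Complex.sub_im, hx, sub_zero]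
  exact nonneg_of_mul_nonneg_right (hscale ▸ hr_im) (pow_pos hr n)

/-- The Hopf boundary lemma for analytic functions. -/
lemma deriv_pos_of_eventually_im_nonneg {h : ℂ → ℂ} {x : ℝ} (hh : AnalyticAt ℂ h x)
    (hx : (h x).im = 0) (him : ∀ᶠ z in 𝓝[ℍₒ] (x : ℂ), 0 ≤ (h z).im)
    (hne : ¬ ∀ᶠ z in 𝓝 (x : ℂ), h z = h x) :
    0 < (deriv h x).re ∧ (deriv h x).im = 0 := by
  have hsub : AnalyticAt ℂ (fun z => h z - h x) x := by fun_prop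
  obtain ⟨n, g, hg, hgx, hhg⟩ :=
    hsub.exists_eventuallyEq_pow_smul_nonzero_iff.2 (by simpa only [sub_eq_zero] using hne)
  simp only [smul_eq_mul] at hhg
  have hn : n ≠ 0 := by
    rintro rfl
    exact hgx (by simpa using hhg.self_of_nhds.symm)
  obtain ⟨rfl, hre_im⟩ := eq_one_and_pos_of_forall_pow_mul_im_nonneg hn hgx
    (forall_pow_mul_im_nonneg_of_eventually hx him hg.continuousAt hhg)
  have hderiv : deriv h x = g x := by
    have hh' : h =ᶠ[𝓝 (x : ℂ)] fun z => h x + (z - x) * g z := by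
      filter_upwards [hhg] with z hz
      linear_combination hz
    have := (((hasDerivAt_id (x : ℂ)).sub_const (x : ℂ)).mul
      hg.differentiableAt.hasDerivAt).const_add (h x)
    rw [hh'.deriv_eq]
    simpa using this.deriv
  rwa [hderiv]

end BoundaryDerivative

section MaximumPrinciple

lemma im_nonneg_of_forall_exists_isCompact {Ω : Set ℂ} {h : ℂ → ℂ} (hΩ : IsOpen Ω)
    (hh : DifferentiableOn ℂ h Ω)
    (hbound : ∀ η > 0, ∃ K ⊆ Ω, IsCompact K ∧ ∀ z ∈ Ω \ K, -η ≤ (h z).im) :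
    ∀ z ∈ Ω, 0 ≤ (h z).im := by
  intro z hz
  refine le_of_forall_pos_sub_le fun η hη => ?_
  rw [zero_sub]
  obtain ⟨K, hKΩ, hK, hout⟩ := hbound η hη
  have hfrontier : ∀ w ∈ frontier K, -η ≤ (h w).im := by
    intro w hw
    have hwΩ : w ∈ Ω := hKΩ (hK.isClosed.frontier_subset hw)
    have hw' : (𝓝[Kᶜ] w).NeBot :=
      mem_closure_iff_nhdsWithin_neBot.1 (frontier_eq_closure_inter_closure.subset hw).2
    have hcont : ContinuousAt h w := hh.continuousOn.continuousAt (hΩ.mem_nhds hwΩ)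
    refine ge_of_tendsto ((Complex.continuous_im.continuousAt.comp hcont).mono_left
      (nhdsWithin_le_nhds (s := Kᶜ))) ?_
    filter_upwards [self_mem_nhdsWithin, mem_nhdsWithin_of_mem_nhds (hΩ.mem_nhds hwΩ)]
      with u hu huΩ using hout u ⟨huΩ, hu⟩
  by_cases hzK : z ∈ K
  · have hexp : DifferentiableOn ℂ (fun w => Complex.exp (Complex.I * h w)) Ω :=
      (hh.const_mul _).cexp
    have hnorm : ∀ w, ‖Complex.exp (Complex.I * h w)‖ ≤ Real.exp η ↔ -η ≤ (h w).im := by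
      intro w
      rw [Complex.norm_exp, Real.exp_le_exp, Complex.I_mul_re, neg_le]
    by_cases hzi : z ∈ interior K
    · refine (hnorm z).1 (Complex.norm_le_of_forall_mem_frontier_norm_le
        (f := fun w => Complex.exp (Complex.I * h w))
        (hK.isBounded.subset interior_subset) ?_ ?_ (subset_closure hzi))
      · exact (hexp.mono ((closure_minimal interior_subset hK.isClosed).trans hKΩ)).diffContOnCl
      · exact fun w hw => (hnorm w).2 (hfrontier w (frontier_interior_subset hw))
    · exact hfrontier z ⟨subset_closure hzK, hzi⟩
  · exact hout z ⟨hz, hzK⟩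

lemma im_nonneg_of_neg_mul_im_div_le {h : ℂ → ℂ} {x C : ℝ} (hC : 0 < C)
    (hh : DifferentiableOn ℂ h ℍₒ) (hcont : ContinuousAt h x) (hx : 0 ≤ (h x).im)
    (hbound : ∀ z ∈ ℍₒ, -(C * z.im / ‖z - x‖ ^ 2) ≤ (h z).im) :
    ∀ z ∈ ℍₒ, 0 ≤ (h z).im := by
  refine im_nonneg_of_forall_exists_isCompact UpperHalfPlane.isOpen_upperHalfPlaneSet hh
    fun η hη => ?_
  obtain ⟨ρ, hρ, hnear⟩ : ∃ ρ > 0, ∀ z : ℂ, ‖z - x‖ < ρ → -η < (h z).im := by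
    have : ∀ᶠ z in 𝓝 (x : ℂ), -η < (h z).im :=
      (Complex.continuous_im.continuousAt.comp hcont).eventually_const_lt
        ((neg_neg_of_pos hη).trans_le hx)
    simpa only [dist_eq_norm] using Metric.eventually_nhds_iff.1 this
  set δ := η * ρ ^ 2 / C with hδ
  set R := C / η with hR
  refine ⟨{z | δ ≤ z.im} ∩ Metric.closedBall x R, ?_, ?_, ?_⟩
  · exact fun z hz => lt_of_lt_of_le (by positivity : 0 < δ) hz.1
  · exact (isCompact_closedBall _ _).inter_left
      (isClosed_le continuous_const Complex.continuous_im)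
  · rintro z ⟨hz : 0 < z.im, hzK⟩
    rcases lt_or_ge ‖z - x‖ ρ with hzρ | hzρ
    · exact (hnear z hzρ).le
    have hpos : 0 < ‖z - x‖ := hρ.trans_le hzρ
    refine (neg_le_neg ?_).trans (hbound z hz)
    rw [div_le_iff₀ (by positivity)]
    rcases lt_or_ge z.im δ with him | him
    · calc C * z.im ≤ C * δ := by gcongr
        _ = η * ρ ^ 2 := by rw [hδ]; field_simp
        _ ≤ η * ‖z - x‖ ^ 2 := by gcongr
    · have hzR : R < ‖z - x‖ := by
        simpa only [mem_inter_iff, mem_ofPred_eq, him, true_and, Metric.mem_closedBall,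
          dist_eq_norm, not_le] using hzK
      have himle : z.im ≤ ‖z - x‖ := by
        simpa using (le_abs_self _).trans (Complex.abs_im_le_norm (z - x))
      calc C * z.im ≤ (η * R) * ‖z - x‖ := by
            rw [hR, mul_div_cancel₀ _ hη.ne']; gcongr
        _ ≤ (η * ‖z - x‖) * ‖z - x‖ := by gcongr
        _ = η * ‖z - x‖ ^ 2 := by ring

end MaximumPrinciple

section Schwarzian

variable {f : ℂ → ℂ} {x : ℂ}

lemma analyticAt_iterate_dslope (hf : AnalyticAt ℂ f x) (n : ℕ) :
    AnalyticAt ℂ ((Function.swap dslope x)^[n] f) x :=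
  (hf.hasFPowerSeriesAt.has_fpower_series_iterate_dslope_fslope n).analyticAt

lemma iterate_dslope_apply_self (hf : AnalyticAt ℂ f x) (n : ℕ) :
    (Function.swap dslope x)^[n] f x = iteratedDeriv n f x / n.factorial := by
  have h := (hf.hasFPowerSeriesAt.has_fpower_series_iterate_dslope_fslope n).coeff_zero 1
  rw [← FormalMultilinearSeries.coeff, FormalMultilinearSeries.coeff_iterate_fslope, zero_add,
    FormalMultilinearSeries.coeff_ofScalars] at h
  exact h.symm

/-- The function `1 / (f'(x) (z - x)) - 1 / (f z - f x)` of `z`, extended analytically to `z = x`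
(when `f'(x) ≠ 0`) by means of the divided differences of `f`. For a self-map of `ℂ₊` it is the
Herglotz function left after removing the pole of `-1 / (f z - f x)` at `x`. -/
noncomputable def reciprocalRemainder (f : ℂ → ℂ) (x z : ℂ) : ℂ :=
  dslope (dslope f x) x z / (deriv f x * dslope f x z)

lemma reciprocalRemainder_of_ne {z : ℂ} (hf' : deriv f x ≠ 0) (hz : z ≠ x) (hfz : f z ≠ f x) :
    reciprocalRemainder f x z = 1 / (deriv f x * (z - x)) - 1 / (f z - f x) := by
  have hz' : z - x ≠ 0 := sub_ne_zero.2 hz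
  have hfz' : f z - f x ≠ 0 := sub_ne_zero.2 hfz
  simp only [reciprocalRemainder, dslope_of_ne _ hz, slope_def_field, dslope_same]
  field_simp

lemma reciprocalRemainder_self (hf : AnalyticAt ℂ f x) :
    reciprocalRemainder f x x = iteratedDeriv 2 f x / (2 * deriv f x ^ 2) := by
  have h₂ : dslope (dslope f x) x x = iteratedDeriv 2 f x / 2 := iterate_dslope_apply_self hf 2
  rw [reciprocalRemainder, h₂, dslope_same]
  ring

lemma analyticAt_reciprocalRemainder (hf : AnalyticAt ℂ f x) (hf' : deriv f x ≠ 0) :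
    AnalyticAt ℂ (reciprocalRemainder f x) x :=
  (analyticAt_iterate_dslope hf 2).div (analyticAt_const.mul (analyticAt_iterate_dslope hf 1))
    (mul_ne_zero hf' (by simpa [Function.swap] using hf'))

lemma deriv_reciprocalRemainder_self (hf : AnalyticAt ℂ f x) (hf' : deriv f x ≠ 0) :
    deriv (reciprocalRemainder f x) x =
      (2 * deriv f x * iteratedDeriv 3 f x - 3 * iteratedDeriv 2 f x ^ 2) /
        (12 * deriv f x ^ 3) := by
  have h₂ : dslope (dslope f x) x x = iteratedDeriv 2 f x / 2 := iterate_dslope_apply_self hf 2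
  have h₃ : deriv (dslope (dslope f x) x) x = iteratedDeriv 3 f x / 6 := by
    rw [← dslope_same]
    exact iterate_dslope_apply_self hf 3
  have hquot := (analyticAt_iterate_dslope hf 2).differentiableAt.hasDerivAt.div
    ((analyticAt_iterate_dslope hf 1).differentiableAt.hasDerivAt.const_mul (deriv f x))
    (mul_ne_zero hf' (by simpa [Function.swap] using hf'))
  simp only [Function.iterate_succ, Function.iterate_zero, Function.comp_apply, id_eq,
    Function.swap] at hquot
  rw [← dslope_same (dslope f x), dslope_same f, h₂, h₃] at hquot
  refine hquot.deriv.trans ?_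
  field_simp
  ring

end Schwarzian

section HalfPlaneSelfMap

variable {f : ℂ → ℂ} {x : ℝ}

lemma ne_of_mapsTo_upperHalfPlaneSet (hmaps : MapsTo f ℍₒ ℍₒ) (hx : (f x).im = 0) {z : ℂ}
    (hz : z ∈ ℍₒ) : f z ≠ f x := by
  intro h
  have hfz : 0 < (f z).im := hmaps hz
  rw [h, hx] at hfz
  exact hfz.false

lemma deriv_pos_of_mapsTo_upperHalfPlaneSet (hmaps : MapsTo f ℍₒ ℍₒ) (hf : AnalyticAt ℂ f x)
    (hx : (f x).im = 0) : 0 < (deriv f x).re ∧ (deriv f x).im = 0 := by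
  refine deriv_pos_of_eventually_im_nonneg hf hx
    (eventually_nhdsWithin_of_forall fun z hz => (hmaps hz).le) fun hconst => ?_
  have := neBot_nhdsWithin_upperHalfPlaneSet x
  obtain ⟨z, hfz, hz⟩ :=
    ((hconst.filter_mono nhdsWithin_le_nhds).and (self_mem_nhdsWithin (s := ℍₒ))).exists
  exact ne_of_mapsTo_upperHalfPlaneSet hmaps hx hz hfz

lemma ne_ofReal_of_mem_upperHalfPlaneSet {z : ℂ} (hz : z ∈ ℍₒ) (x : ℝ) : z ≠ x := by
  rintro rfl
  simp at hz

lemma differentiableOn_reciprocalRemainder (hd : DifferentiableOn ℂ f ℍₒ)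
    (hmaps : MapsTo f ℍₒ ℍₒ) (hx : (f x).im = 0) (hf' : deriv f x ≠ 0) :
    DifferentiableOn ℂ (reciprocalRemainder f x) ℍₒ := by
  have hne : ∀ z ∈ ℍₒ, f z - f x ≠ 0 := fun z hz =>
    sub_ne_zero.2 (ne_of_mapsTo_upperHalfPlaneSet hmaps hx hz)
  have hne' : ∀ z ∈ ℍₒ, deriv f x * (z - x) ≠ 0 := fun z hz =>
    mul_ne_zero hf' (sub_ne_zero.2 (ne_ofReal_of_mem_upperHalfPlaneSet hz x))
  refine DifferentiableOn.congr (f := fun z => 1 / (deriv f x * (z - x)) - 1 / (f z - f x))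
    ?_ fun z hz => reciprocalRemainder_of_ne hf' (ne_ofReal_of_mem_upperHalfPlaneSet hz x)
      (ne_of_mapsTo_upperHalfPlaneSet hmaps hx hz)
  exact ((differentiableOn_const _).div (by fun_prop) hne').sub
    ((differentiableOn_const _).div (hd.sub_const _) hne)

lemma reciprocalRemainder_im_nonneg (hd : DifferentiableOn ℂ f ℍₒ) (hmaps : MapsTo f ℍₒ ℍₒ)
    (hf : AnalyticAt ℂ f x) (hx : (f x).im = 0) (hx₂ : 0 ≤ (iteratedDeriv 2 f x).im) :
    ∀ z ∈ ℍₒ, 0 ≤ (reciprocalRemainder f x z).im := by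
  obtain ⟨hpos, him⟩ := deriv_pos_of_mapsTo_upperHalfPlaneSet hmaps hf hx
  set c := (deriv f x).re
  have hc : deriv f x = c := Complex.ext rfl him
  have hf' : deriv f x ≠ 0 := by rw [hc]; exact_mod_cast hpos.ne'
  refine im_nonneg_of_neg_mul_im_div_le (inv_pos.2 hpos)
    (differentiableOn_reciprocalRemainder hd hmaps hx hf')
    (analyticAt_reciprocalRemainder hf hf').continuousAt ?_ fun z hz => ?_
  · have h2c : (2 * deriv f x ^ 2 : ℂ) = (2 * c ^ 2 : ℝ) := by rw [hc]; push_cast; rfl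
    rw [reciprocalRemainder_self hf, h2c, Complex.div_ofReal_im]
    positivity
  · have hpole : (1 / (deriv f x * (z - x))).im = -(c⁻¹ * z.im / ‖z - x‖ ^ 2) := by
      rw [hc, one_div, mul_inv, ← Complex.ofReal_inv, Complex.im_ofReal_mul, Complex.inv_im,
        Complex.normSq_eq_norm_sq, Complex.sub_im, Complex.ofReal_im, sub_zero]
      ring
    have hrecip : 0 ≤ -(1 / (f z - f x)).im := by
      rw [one_div, Complex.inv_im, Complex.sub_im, hx, sub_zero, neg_div, neg_neg]
      exact div_nonneg (hmaps hz).le (Complex.normSq_nonneg _)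
    rw [reciprocalRemainder_of_ne hf' (ne_ofReal_of_mem_upperHalfPlaneSet hz x)
      (ne_of_mapsTo_upperHalfPlaneSet hmaps hx hz), Complex.sub_im, hpole, sub_eq_add_neg]
    exact le_add_of_nonneg_right hrecip

/-- A constant remainder makes `f` a Möbius transformation, which can be inverted explicitly. -/
lemma surjOn_of_reciprocalRemainder_eqOn (hmaps : MapsTo f ℍₒ ℍₒ) (hx : (f x).im = 0)
    (hpos : 0 < (deriv f x).re) (him : (deriv f x).im = 0) {κ : ℂ} (hκ : κ.im = 0)
    (hR : EqOn (reciprocalRemainder f x) (fun _ => κ) ℍₒ) : SurjOn f ℍₒ ℍₒ := by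
  intro v hv
  set c := (deriv f x).re
  have hc : deriv f x = c := Complex.ext rfl him
  have hc0 : (c : ℂ) ≠ 0 := by exact_mod_cast hpos.ne'
  have hvx : 0 < (v - f x).im := by rwa [Complex.sub_im, hx, sub_zero]
  have hvx0 : v - f x ≠ 0 := fun h => hvx.ne' (by rw [h, Complex.zero_im])
  set q : ℂ := κ + (v - f x)⁻¹ with hq
  have hqim : q.im < 0 := by
    rw [hq, Complex.add_im, hκ, zero_add, Complex.inv_im]
    exact div_neg_of_neg_of_pos (neg_neg_of_pos hvx) (Complex.normSq_pos.2 hvx0)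
  have hq0 : q ≠ 0 := fun h => hqim.ne (by rw [h, Complex.zero_im])
  set z : ℂ := x + q⁻¹ / c with hz
  have hzx : c * (z - x) = q⁻¹ := by rw [hz, add_sub_cancel_left, mul_div_cancel₀ _ hc0]
  have hzim : z ∈ ℍₒ := by
    rw [mem_ofPred_eq, hz, Complex.add_im, Complex.ofReal_im, zero_add, Complex.div_ofReal_im,
      Complex.inv_im]
    exact div_pos (div_pos (neg_pos.2 hqim) (Complex.normSq_pos.2 hq0)) hpos
  refine ⟨z, hzim, ?_⟩
  have hκz : (c * (z - x))⁻¹ - (f z - f x)⁻¹ = κ := by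
    have hRz := reciprocalRemainder_of_ne (hc ▸ hc0)
      (ne_ofReal_of_mem_upperHalfPlaneSet hzim x) (ne_of_mapsTo_upperHalfPlaneSet hmaps hx hzim)
    rw [hc, one_div, one_div] at hRz
    exact hRz.symm.trans (hR hzim)
  have hinv : (f z - f x)⁻¹ = (v - f x)⁻¹ := by
    rw [hzx, inv_inv] at hκz
    linear_combination hq - hκz
  exact sub_left_injective (inv_injective hinv)

lemma eqOn_upperHalfPlaneSet_of_eventually_eq {h : ℂ → ℂ} {κ : ℂ} (hd : DifferentiableOn ℂ h ℍₒ)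
    (hκ : ∀ᶠ z in 𝓝 (x : ℂ), h z = κ) : EqOn h (fun _ => κ) ℍₒ := by
  have := neBot_nhdsWithin_upperHalfPlaneSet x
  obtain ⟨z, hz, hzH⟩ := ((hκ.eventually_nhds.filter_mono nhdsWithin_le_nhds).and
    (self_mem_nhdsWithin (s := ℍₒ))).exists
  have hana := hd.analyticOnNhd UpperHalfPlane.isOpen_upperHalfPlaneSet
  exact hana.eqOn_of_preconnected_of_eventuallyEq analyticOnNhd_const
    (convex_halfSpace_im_gt 0).isPreconnected hzH hz

/-- Positivity of the Schwarzian derivative, up to the factor `2 f'(x) ^ 2`. -/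
lemma three_mul_sq_lt_of_mapsTo_upperHalfPlaneSet (hd : DifferentiableOn ℂ f ℍₒ)
    (hmaps : MapsTo f ℍₒ ℍₒ) (hsurj : ¬ SurjOn f ℍₒ ℍₒ) (hf : AnalyticAt ℂ f x)
    (hx : (f x).im = 0) (hx₂ : (iteratedDeriv 2 f x).im = 0) :
    3 * (iteratedDeriv 2 f x).re ^ 2 < 2 * (deriv f x).re * (iteratedDeriv 3 f x).re := by
  obtain ⟨hpos, him⟩ := deriv_pos_of_mapsTo_upperHalfPlaneSet hmaps hf hx
  set c := (deriv f x).re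
  set b := (iteratedDeriv 2 f x).re
  have hc : deriv f x = c := Complex.ext rfl him
  have hb : iteratedDeriv 2 f x = b := Complex.ext rfl hx₂
  have hf' : deriv f x ≠ 0 := by rw [hc]; exact_mod_cast hpos.ne'
  have hRx : (reciprocalRemainder f x x).im = 0 := by
    rw [reciprocalRemainder_self hf, hc, hb]
    norm_cast
  have hR' : 0 < (deriv (reciprocalRemainder f x) x).re := by
    refine (deriv_pos_of_eventually_im_nonneg (analyticAt_reciprocalRemainder hf hf') hRx
      (eventually_nhdsWithin_of_forall
        (reciprocalRemainder_im_nonneg hd hmaps hf hx hx₂.ge)) fun hconst => hsurj ?_).1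
    exact surjOn_of_reciprocalRemainder_eqOn hmaps hx hpos him hRx
      (eqOn_upperHalfPlaneSet_of_eventually_eq
        (differentiableOn_reciprocalRemainder hd hmaps hx hf') hconst)
  have hre : (deriv (reciprocalRemainder f x) x).re =
      (2 * c * (iteratedDeriv 3 f x).re - 3 * b ^ 2) / (12 * c ^ 3) := by
    rw [deriv_reciprocalRemainder_self hf hf', hc, hb,
      show (12 * c ^ 3 : ℂ) = (12 * c ^ 3 : ℝ) by push_cast; rfl, Complex.div_ofReal_re,
      Complex.sub_re, show (2 * c : ℂ) = (2 * c : ℝ) by push_cast; rfl, Complex.re_ofReal_mul]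
    norm_cast
  rw [hre] at hR'
  exact sub_pos.1 ((div_pos_iff_of_pos_right (by positivity)).1 hR')

lemma not_surjOn_of_re_nonpos (hre : ∀ z ∈ ℍₒ, (f z).re ≤ 0) : ¬ SurjOn f ℍₒ ℍₒ := by
  intro hsurj
  obtain ⟨z, hz, hfz⟩ := hsurj (show 1 + Complex.I ∈ ℍₒ by simp [UpperHalfPlane.upperHalfPlaneSet])
  have := hre z hz
  norm_num [hfz] at this

end HalfPlaneSelfMap

local notation "ℓ²" => lp (fun _ : ℤ => ℂ) 2

section Spectrum

lemma exists_norm_le_of_notMem_spectrum {𝕜 E : Type*} [NontriviallyNormedField 𝕜]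
    [NormedAddCommGroup E] [NormedSpace 𝕜 E] {T : E →L[𝕜] E} {y : 𝕜} (hy : y ∉ spectrum 𝕜 T) :
    ∃ K, 0 ≤ K ∧ ∀ φ, ‖φ‖ ≤ K * ‖T φ - y • φ‖ := by
  obtain ⟨u, hu⟩ := spectrum.notMem_iff.1 hy
  refine ⟨‖(↑u⁻¹ : E →L[𝕜] E)‖, norm_nonneg _, fun φ => ?_⟩
  have hinv : (↑u⁻¹ : E →L[𝕜] E) (y • φ - T φ) = φ := by
    have huφ : (u : E →L[𝕜] E) φ = y • φ - T φ := by
      rw [hu, sub_apply, Algebra.algebraMap_eq_smul_one]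
      rfl
    rw [← huφ]
    exact DFunLike.congr_fun u.inv_mul φ
  calc ‖φ‖ = ‖(↑u⁻¹ : E →L[𝕜] E) (y • φ - T φ)‖ := by rw [hinv]
    _ ≤ ‖(↑u⁻¹ : E →L[𝕜] E)‖ * ‖T φ - y • φ‖ := by
      rw [norm_sub_rev]
      exact ContinuousLinearMap.le_opNorm _ _

variable {V : ℤ → ℝ} {H : ℓ² →L[ℂ] ℓ²} {y : ℂ} {ψ : ℕ → ℂ}

lemma schrodinger_apply_single (hH : ∀ φ : ℓ², ∀ n : ℤ,
    (H φ : ℤ → ℂ) n = φ (n - 1) + φ (n + 1) + (V n : ℂ) * φ n) (m : ℤ) (a : ℂ) :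
    H (lp.single 2 m a) =
      lp.single 2 (m + 1) a + lp.single 2 (m - 1) a + lp.single 2 m (V m * a) := by
  ext n
  simp only [hH, lp.coeFn_add, Pi.add_apply, lp.single_apply, Pi.single_apply,
    sub_eq_iff_eq_add, eq_sub_iff_add_eq, mul_ite, mul_zero]
  by_cases hn : n = m
  · rw [hn]
  · simp only [hn, if_false]

/-- The Weyl sequence of a solution `ψ`: its truncation to the sites `1, …, N`. -/
noncomputable def truncatedSolution (ψ : ℕ → ℂ) (N : ℕ) : ℓ² :=
  ∑ k ∈ Finset.range N, lp.single 2 ((k : ℤ) + 1) (ψ (k + 1))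

lemma norm_truncatedSolution_sq (ψ : ℕ → ℂ) (N : ℕ) :
    ‖truncatedSolution ψ N‖ ^ 2 = ∑ k ∈ Finset.range N, ‖ψ (k + 1)‖ ^ 2 := by
  have h := lp.norm_sum_single (p := 2) (E := fun _ : ℤ => ℂ) (by simp) (fun n => ψ n.toNat)
    ((Finset.range N).map (Nat.castEmbedding.trans (addRightEmbedding (1 : ℤ))))
  have htoNat : ∀ k : ℕ, ((k : ℤ) + 1).toNat = k + 1 := fun k => by omega
  simpa [truncatedSolution, Finset.sum_map, htoNat] using h

/-- Away from the two ends of `[1, N]` the truncation solves the equation, so that applying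
`H - y` to the individual sites produces a telescoping sum. -/
lemma schrodinger_apply_truncatedSolution (hH : ∀ φ : ℓ², ∀ n : ℤ,
    (H φ : ℤ → ℂ) n = φ (n - 1) + φ (n + 1) + (V n : ℂ) * φ n)
    (hψ : ∀ n : ℕ, ψ n + ψ (n + 2) + V (n + 1) * ψ (n + 1) = y * ψ (n + 1)) (N : ℕ) :
    H (truncatedSolution ψ N) - y • truncatedSolution ψ N =
      (lp.single 2 ((N : ℤ) + 1) (ψ N) - lp.single 2 (N : ℤ) (ψ (N + 1))) -
        (lp.single 2 1 (ψ 0) - lp.single 2 0 (ψ 1)) := by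
  set W : ℕ → ℓ² := fun k =>
    lp.single 2 ((k : ℤ) + 1) (ψ k) - lp.single 2 (k : ℤ) (ψ (k + 1)) with hW
  have hsite : ∀ k : ℕ, H (lp.single 2 ((k : ℤ) + 1) (ψ (k + 1))) -
      y • lp.single 2 ((k : ℤ) + 1) (ψ (k + 1)) = W (k + 1) - W k := by
    intro k
    have hVψ : (V (k + 1) : ℂ) * ψ (k + 1) = y * ψ (k + 1) - ψ k - ψ (k + 2) := by
      linear_combination hψ k
    rw [schrodinger_apply_single hH, hVψ, lp.single_sub, lp.single_sub, ← smul_eq_mul,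
      lp.single_smul, hW]
    simp only [add_sub_cancel_right, Nat.cast_add, Nat.cast_one]
    abel
  simp only [truncatedSolution, map_sum, Finset.smul_sum, ← Finset.sum_sub_distrib, hsite,
    Finset.sum_range_sub]
  simp [hW]

lemma mem_spectrum_of_bounded_of_not_summable (hH : ∀ φ : ℓ², ∀ n : ℤ,
    (H φ : ℤ → ℂ) n = φ (n - 1) + φ (n + 1) + (V n : ℂ) * φ n)
    (hψ : ∀ n : ℕ, ψ n + ψ (n + 2) + V (n + 1) * ψ (n + 1) = y * ψ (n + 1)) {C : ℝ}
    (hbdd : ∀ n, ‖ψ n‖ ≤ C) (hsum : ¬ Summable fun n => ‖ψ n‖ ^ 2) : y ∈ spectrum ℂ H := by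
  by_contra hy
  obtain ⟨K, hK, hle⟩ := exists_norm_le_of_notMem_spectrum hy
  have hend : ∀ (i : ℤ) (n : ℕ), ‖(lp.single 2 i (ψ n) : ℓ²)‖ ≤ C := fun i n => by
    rw [lp.norm_single (by norm_num)]
    exact hbdd n
  have hresidual : ∀ N, ‖H (truncatedSolution ψ N) - y • truncatedSolution ψ N‖ ≤
      C + C + (C + C) := by
    intro N
    rw [schrodinger_apply_truncatedSolution hH hψ]
    exact norm_sub_le_of_le (norm_sub_le_of_le (hend _ _) (hend _ _))
      (norm_sub_le_of_le (hend _ _) (hend _ _))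
  refine hsum ((summable_nat_add_iff 1).1 ?_)
  refine summable_of_sum_range_le (c := (K * (C + C + (C + C))) ^ 2) (fun n => by positivity)
    fun N => ?_
  rw [← norm_truncatedSolution_sq]
  gcongr
  exact (hle _).trans (by gcongr; exact hresidual N)

end Spectrum

section FloquetTheory

variable {p : ℕ} {V : ℤ → ℝ} {y ρ : ℂ} {v : Fin 2 → ℂ}

lemma monodromyMatrix_succ (V : ℤ → ℝ) (y : ℂ) (n : ℕ) :
    monodromyMatrix (n + 1) V y = transferMatrix V (n + 1) y * monodromyMatrix n V y := by
  have hshift : ∀ i : ℕ, ((n + 1 : ℕ) : ℤ) - ((i + 1 : ℕ) : ℤ) = n - i := fun i => by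
    push_cast
    ring
  simp only [monodromyMatrix, bind_pure_comp, List.map_eq_map, List.map_map,
    List.range_succ_eq_map, List.map_cons, List.prod_cons, Function.comp_def,
    Nat.succ_eq_add_one, hshift]
  simp

lemma det_monodromyMatrix (V : ℤ → ℝ) (y : ℂ) (n : ℕ) : (monodromyMatrix n V y).det = 1 := by
  induction n with
  | zero => simp [monodromyMatrix]
  | succ n ih => rw [monodromyMatrix_succ, Matrix.det_mul, ih]; simp [transferMatrix]

/-- `floquetOrbit V y v n` is the pair `(ψ (n + 1), ψ n)` for the solution `ψ` of the difference
equation at energy `y` on the half-line `n ≥ 0` with initial data `(ψ 1, ψ 0) = v`. -/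
noncomputable def floquetOrbit (V : ℤ → ℝ) (y : ℂ) (v : Fin 2 → ℂ) (n : ℕ) : Fin 2 → ℂ :=
  (monodromyMatrix n V y).mulVec v

lemma floquetOrbit_zero : floquetOrbit V y v 0 = v := by
  simp [floquetOrbit, monodromyMatrix]

lemma floquetOrbit_succ (n : ℕ) :
    floquetOrbit V y v (n + 1) = (transferMatrix V (n + 1) y).mulVec (floquetOrbit V y v n) := by
  rw [floquetOrbit, monodromyMatrix_succ, floquetOrbit, Matrix.mulVec_mulVec]

lemma floquetOrbit_succ_one (n : ℕ) : floquetOrbit V y v (n + 1) 1 = floquetOrbit V y v n 0 := by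
  simp [floquetOrbit_succ, transferMatrix, Matrix.vecHead]

lemma floquetOrbit_recurrence (n : ℕ) :
    floquetOrbit V y v n 1 + floquetOrbit V y v (n + 2) 1 +
      V (n + 1) * floquetOrbit V y v (n + 1) 1 = y * floquetOrbit V y v (n + 1) 1 := by
  rw [floquetOrbit_succ_one (n + 1), floquetOrbit_succ_one n, floquetOrbit_succ n]
  simp only [transferMatrix, Matrix.cons_mulVec, Matrix.cons_dotProduct, Matrix.vecHead,
    Matrix.vecTail, Matrix.dotProduct_of_isEmpty, Matrix.empty_mulVec, Matrix.cons_val_zero,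
    Function.comp_apply, Fin.succ_zero_eq_one, neg_mul, one_mul, add_zero]
  ring

lemma floquetOrbit_add_period (hV : ∀ n : ℤ, V (n + p) = V n)
    (hv : (monodromyMatrix p V y).mulVec v = ρ • v) (n : ℕ) :
    floquetOrbit V y v (n + p) = ρ • floquetOrbit V y v n := by
  induction n with
  | zero => rw [zero_add, floquetOrbit_zero, floquetOrbit, hv]
  | succ n ih =>
    have hT : transferMatrix V ((n + p : ℕ) + 1) y = transferMatrix V (n + 1) y := by
      rw [transferMatrix, transferMatrix, Nat.cast_add, add_right_comm, hV]
    rw [add_right_comm, floquetOrbit_succ, ih, hT, floquetOrbit_succ, Matrix.mulVec_smul]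

lemma exists_norm_eq_one_mulVec_eq_smul {M : Matrix (Fin 2) (Fin 2) ℂ} (hdet : M.det = 1) {D : ℝ}
    (htr : M.trace = D) (hD : |D| ≤ 2) :
    ∃ ρ : ℂ, ‖ρ‖ = 1 ∧ ∃ v : Fin 2 → ℂ, v ≠ 0 ∧ M.mulVec v = ρ • v := by
  obtain ⟨hD₁, hD₂⟩ := abs_le.1 hD
  set θ := Real.arccos (D / 2)
  have hcos : (D : ℂ) = 2 * Complex.cos θ := by
    rw [← Complex.ofReal_cos, Real.cos_arccos (by linarith) (by linarith)]
    push_cast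
    ring
  set ρ := Complex.exp (θ * Complex.I) with hρ
  have hchar : ρ ^ 2 - D * ρ + 1 = 0 := by
    have hinv : ρ * Complex.exp (-θ * Complex.I) = 1 := by
      rw [hρ, ← Complex.exp_add, neg_mul, add_neg_cancel, Complex.exp_zero]
    rw [hcos, Complex.two_cos]
    linear_combination -hinv
  have hsing : (M - ρ • (1 : Matrix (Fin 2) (Fin 2) ℂ)).det = 0 := by
    rw [Matrix.trace_fin_two] at htr
    rw [Matrix.det_fin_two] at hdet ⊢
    simp only [Matrix.sub_apply, Matrix.smul_apply, Matrix.one_apply_eq, smul_eq_mul, mul_one,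
      Matrix.one_apply_ne zero_ne_one, Matrix.one_apply_ne one_ne_zero, mul_zero, sub_zero]
    linear_combination hchar + hdet - ρ * htr
  obtain ⟨v, hv0, hv⟩ := Matrix.exists_mulVec_eq_zero_iff.2 hsing
  refine ⟨ρ, Complex.norm_exp_ofReal_mul_I θ, v, hv0, ?_⟩
  rwa [Matrix.sub_mulVec, sub_eq_zero, Matrix.smul_mulVec, Matrix.one_mulVec] at hv

lemma eq_of_periodic_of_tendsto_atTop {X : Type*} [TopologicalSpace X] [T2Space X] {f : ℕ → X}
    {a : X} (hf : Function.Periodic f p) (hp : p ≠ 0) (ha : Tendsto f atTop (𝓝 a)) (n : ℕ) :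
    f n = a := by
  have hsub : Tendsto (fun k => n + k * p) atTop atTop :=
    tendsto_atTop_mono (fun k => (Nat.le_mul_of_pos_right k (Nat.pos_of_ne_zero hp)).trans
      (Nat.le_add_left _ n)) tendsto_id
  refine tendsto_nhds_unique (tendsto_const_nhds.congr fun k => ?_) (ha.comp hsub)
  exact (hf.nat_mul k n).symm

lemma norm_le_sum_range_of_periodic {E : Type*} [SeminormedAddCommGroup E] {f : ℕ → E}
    (hf : Function.Periodic (fun n => ‖f n‖) p) (hp : p ≠ 0) (n : ℕ) :
    ‖f n‖ ≤ ∑ i ∈ Finset.range p, ‖f i‖ := by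
  rw [← hf.map_mod_nat n]
  exact Finset.single_le_sum (f := fun i => ‖f i‖) (fun i _ => norm_nonneg _)
    (Finset.mem_range.2 (Nat.mod_lt _ (Nat.pos_of_ne_zero hp)))

lemma mem_spectrum_of_abs_floquetDiscriminant_le_two {H : ℓ² →L[ℂ] ℓ²}
    (hH : ∀ φ : ℓ², ∀ n : ℤ, (H φ : ℤ → ℂ) n = φ (n - 1) + φ (n + 1) + (V n : ℂ) * φ n)
    (hp : p ≠ 0) (hV : ∀ n : ℤ, V (n + p) = V n) {D : ℝ} (hD : floquetDiscriminant p V y = D)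
    (hD₂ : |D| ≤ 2) : y ∈ spectrum ℂ H := by
  obtain ⟨ρ, hρ, v, hv0, hv⟩ :=
    exists_norm_eq_one_mulVec_eq_smul (det_monodromyMatrix V y p) hD hD₂
  set ψ : ℕ → ℂ := fun n => floquetOrbit V y v n 1 with hψ
  have hper : Function.Periodic (fun n => ‖ψ n‖) p := fun n => by
    simp only [hψ, floquetOrbit_add_period hV hv, Pi.smul_apply, smul_eq_mul, norm_mul, hρ, one_mul]
  refine mem_spectrum_of_bounded_of_not_summable hH floquetOrbit_recurrence
    (norm_le_sum_range_of_periodic hper hp) fun hsum => hv0 ?_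
  have hzero : ∀ n, ψ n = 0 := fun n => by
    have hper_sq : Function.Periodic (fun n => ‖ψ n‖ ^ 2) p := fun n => by
      simp only [hper n]
    exact norm_eq_zero.1 (pow_eq_zero_iff two_ne_zero |>.1
      (eq_of_periodic_of_tendsto_atTop hper_sq hp hsum.tendsto_atTop_zero n))
  ext i
  fin_cases i
  · simpa [hψ, floquetOrbit_succ_one, floquetOrbit_zero] using hzero 1
  · simpa [hψ, floquetOrbit_zero] using hzero 0

lemma exists_polynomial_floquetDiscriminant_eq (p : ℕ) (V : ℤ → ℝ) :
    ∃ P : ℝ[X], ∀ z : ℂ, floquetDiscriminant p V z = aeval z P := by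
  suffices hM : ∃ M : Matrix (Fin 2) (Fin 2) ℝ[X], ∀ z : ℂ,
      monodromyMatrix p V z = (aeval z).mapMatrix M by
    obtain ⟨M, hM⟩ := hM
    refine ⟨M.trace, fun z => ?_⟩
    rw [floquetDiscriminant, hM z]
    exact (AddMonoidHom.map_trace (aeval z : ℝ[X] →ₐ[ℝ] ℂ) M).symm
  induction p with
  | zero => exact ⟨1, fun z => by rw [map_one]; simp [monodromyMatrix]⟩
  | succ n ih =>
    obtain ⟨M, hM⟩ := ih
    refine ⟨!![X - C (V (n + 1)), -1; 1, 0] * M, fun z => ?_⟩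
    rw [map_mul, ← hM, monodromyMatrix_succ]
    congr 1
    ext i j
    fin_cases i <;> fin_cases j <;> simp [transferMatrix]

lemma two_lt_abs_eval_of_notMem_spectrum {H : ℓ² →L[ℂ] ℓ²} {P : ℝ[X]} {t : ℝ}
    (hH : ∀ φ : ℓ², ∀ n : ℤ, (H φ : ℤ → ℂ) n = φ (n - 1) + φ (n + 1) + (V n : ℂ) * φ n)
    (hp : p ≠ 0) (hV : ∀ n : ℤ, V (n + p) = V n)
    (hP : ∀ z, floquetDiscriminant p V z = aeval z P) (ht : (t : ℂ) ∉ spectrum ℂ H) :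
    2 < |P.eval t| := by
  contrapose! ht
  refine mem_spectrum_of_abs_floquetDiscriminant_le_two hH hp hV ?_ ht
  rw [hP, ← Complex.coe_algebraMap, aeval_algebraMap_apply_eq_algebraMap_eval]

end FloquetTheory

section RealRootedPolynomials

/-- The Laguerre expression `P' ^ 2 - P P''` of a polynomial `P`, which is nonnegative when `P` has
only real roots. -/
noncomputable def laguerre {R : Type*} [CommRing R] (P : R[X]) : R[X] :=
  derivative P ^ 2 - P * derivative (derivative P)

lemma laguerre_mul {R : Type*} [CommRing R] (P Q : R[X]) :
    laguerre (P * Q) = P ^ 2 * laguerre Q + Q ^ 2 * laguerre P := by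
  simp only [laguerre, derivative_mul, derivative_add]
  ring

lemma laguerre_eval_nonneg {K : Type*} [Field K] [LinearOrder K] [IsStrictOrderedRing K] {P : K[X]}
    (hP : P.Splits) (x : K) : 0 ≤ (laguerre P).eval x := by
  induction hP using Submonoid.closure_induction with
  | mem P hP => rcases hP with ⟨a, rfl⟩ | ⟨a, rfl⟩ <;> simp [laguerre]
  | one => simp [laguerre]
  | mul P Q _ _ hP hQ =>
    rw [laguerre_mul, eval_add, eval_mul, eval_mul, eval_pow, eval_pow]
    positivity

lemma laguerre_eval_pos {K : Type*} [Field K] [LinearOrder K] [IsStrictOrderedRing K] {P : K[X]}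
    (hP : P.Splits) (hdeg : P.degree ≠ 0) {x : K} (hx : P.eval x ≠ 0) :
    0 < (laguerre P).eval x := by
  obtain ⟨r, hr⟩ := hP.exists_eval_eq_zero hdeg
  obtain ⟨Q, rfl⟩ := dvd_iff_isRoot.2 hr
  have hQ : 0 ≤ (laguerre Q).eval x := laguerre_eval_nonneg (splits_X_sub_C_mul_iff.1 hP) x
  have hQx : Q.eval x ≠ 0 := right_ne_zero_of_mul (by rwa [eval_mul] at hx)
  have hlin : laguerre (X - C r) = 1 := by simp [laguerre]
  rw [laguerre_mul, hlin, eval_add, eval_mul, eval_mul, eval_pow, eval_pow, eval_one, mul_one]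
  positivity

lemma splits_of_forall_aeval_ne_zero {P : ℝ[X]} (hP : ∀ z ∈ ℍₒ, aeval z P ≠ 0) : P.Splits := by
  refine Splits.of_splits_map (algebraMap ℝ ℂ) (IsAlgClosed.splits _) fun z hz => ?_
  have hz0 : aeval z P = 0 := by
    rw [← eval_map_algebraMap]
    exact isRoot_of_mem_roots hz
  have hconj : aeval (starRingEnd ℂ z) P = 0 := by rw [aeval_conj, hz0, map_zero]
  have him : z.im = 0 := by
    rcases lt_trichotomy z.im 0 with h | h | h
    · exact absurd hconj (hP _ (by simpa using h))
    · exact h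
    · exact absurd hz0 (hP z h)
  exact ⟨z.re, Complex.ext rfl him.symm⟩

lemma isLocalMax_abs_eval_of_splits {P : ℝ[X]} (hP : P.Splits) {e : ℝ} (he : P.eval e ≠ 0)
    (hcrit : P.derivative.eval e = 0) : IsLocalMax (fun y => |P.eval y|) e := by
  by_cases hdeg : P.degree = 0
  · rw [eq_C_of_degree_eq_zero hdeg]
    simpa only [eval_C] using isLocalMax_const
  have hlaguerre := laguerre_eval_pos hP hdeg he
  simp only [laguerre, eval_sub, eval_pow, eval_mul, hcrit] at hlaguerre
  have hderiv : deriv (P ^ 2).eval = (P ^ 2).derivative.eval := funext fun y => Polynomial.deriv _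
  have hsq : IsLocalMax (P ^ 2).eval e := by
    refine isLocalMax_of_deriv_deriv_neg ?_ ?_ (P ^ 2).continuous.continuousAt
    · rw [hderiv, Polynomial.deriv, sq, derivative_mul]
      simp only [derivative_add, derivative_mul, eval_add, eval_mul, hcrit]
      linarith
    · rw [hderiv]
      simp [sq, hcrit]
  filter_upwards [hsq] with y hy
  rwa [eval_pow, eval_pow, sq_le_sq] at hy

lemma abs_eval_eq_and_eval_derivative_ne_zero {P : ℝ[X]} (hP : P.Splits) {e M : ℝ}
    (hM : 0 < M) {l l' : Filter ℝ} [l.NeBot] [l'.NeBot] (hl : l ≤ 𝓝 e) (hl' : l' ≤ 𝓝 e)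
    (hin : ∀ᶠ y in l, |P.eval y| ≤ M) (hout : ∀ᶠ y in l', M < |P.eval y|) :
    |P.eval e| = M ∧ P.derivative.eval e ≠ 0 := by
  have hcont : Tendsto (fun y => |P.eval y|) (𝓝 e) (𝓝 |P.eval e|) := P.continuous.abs.tendsto e
  have hPe : |P.eval e| = M :=
    (le_of_tendsto (hcont.mono_left hl) hin).antisymm
      (ge_of_tendsto (hcont.mono_left hl') (hout.mono fun y hy => hy.le))
  refine ⟨hPe, fun hcrit => ?_⟩
  have hmax := isLocalMax_abs_eval_of_splits hP (abs_pos.1 (hPe ▸ hM)) hcrit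
  obtain ⟨y, hy_le, hy_lt⟩ := ((hmax.filter_mono hl').and hout).exists
  exact (hy_lt.trans_le hy_le).ne hPe.symm

lemma tendsto_inv_sq_of_sq_derivative_eq {P : ℝ[X]} {e B c : ℝ} {l : Filter ℝ} (hl : l ≤ 𝓝 e)
    (hPe : P.eval e ^ 2 = B) (hP'e : P.derivative.eval e ≠ 0) {u : ℝ → ℝ}
    (hu : ∀ᶠ y in l, P.derivative.eval y ^ 2 = c * (B - P.eval y ^ 2) * u y ^ 2) :
    Tendsto (fun y => (u y ^ 2)⁻¹) l (𝓝 0) := by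
  have hP'l : Tendsto P.derivative.eval l (𝓝 (P.derivative.eval e)) :=
    (P.derivative.continuous.tendsto e).mono_left hl
  have hquot : Tendsto (fun y => c * (B - P.eval y ^ 2) / P.derivative.eval y ^ 2) l
      (𝓝 (c * (B - P.eval e ^ 2) / P.derivative.eval e ^ 2)) :=
    (((((P.continuous.tendsto e).mono_left hl).pow 2).const_sub B).const_mul c).div (hP'l.pow 2)
      (pow_ne_zero 2 hP'e)
  rw [hPe, sub_self, mul_zero, zero_div] at hquot
  refine hquot.congr' ?_
  filter_upwards [hu, hP'l.eventually_ne hP'e] with y hy hne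
  have hne_mul : c * (B - P.eval y ^ 2) * u y ^ 2 ≠ 0 := hy ▸ pow_ne_zero 2 hne
  rw [hy, div_mul_cancel_left₀ (left_ne_zero_of_mul hne_mul)]

end RealRootedPolynomials

section RealBoundaryValues

lemma hasDerivAt_iteratedDeriv {F : ℂ → ℂ} {z : ℂ} (hF : AnalyticAt ℂ F z) (n : ℕ) :
    HasDerivAt (iteratedDeriv n F) (iteratedDeriv (n + 1) F z) z := by
  rw [iteratedDeriv_succ, iteratedDeriv_eq_iterate]
  exact (hF.iterated_deriv n).differentiableAt.hasDerivAt

lemma hasDerivAt_re_iteratedDeriv {F : ℂ → ℂ} {y : ℝ} (hF : AnalyticAt ℂ F y) (n : ℕ) :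
    HasDerivAt (fun t : ℝ => (iteratedDeriv n F t).re) (iteratedDeriv (n + 1) F y).re y :=
  (hasDerivAt_iteratedDeriv hF n).real_of_complex

lemma iteratedDeriv_im_eq_zero {F : ℂ → ℂ} {s : Set ℝ} (hs : IsOpen s)
    (hF : ∀ y ∈ s, AnalyticAt ℂ F y) (hreal : ∀ y ∈ s, (F y).im = 0) (n : ℕ) :
    ∀ y ∈ s, (iteratedDeriv n F y).im = 0 := by
  induction n with
  | zero => simpa only [iteratedDeriv_zero] using hreal
  | succ n ih =>
    intro y hy
    have him : HasDerivAt (fun t : ℝ => (-Complex.I * iteratedDeriv n F t).re)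
        (-Complex.I * iteratedDeriv (n + 1) F y).re y :=
      ((hasDerivAt_iteratedDeriv (hF y hy) n).const_mul (-Complex.I)).real_of_complex
    have hzero : (fun t : ℝ => (-Complex.I * iteratedDeriv n F t).re) =ᶠ[𝓝 y] fun _ => 0 := by
      filter_upwards [hs.mem_nhds hy] with t ht
      simp [ih t ht]
    simpa using him.unique ((hasDerivAt_const y 0).congr_of_eventuallyEq hzero)

lemma re_iteratedDeriv_three_pos {F : ℂ → ℂ} {s : Set ℝ} (hd : DifferentiableOn ℂ F ℍₒ)
    (hmaps : MapsTo F ℍₒ ℍₒ) (hsurj : ¬ SurjOn F ℍₒ ℍₒ) (hs : IsOpen s)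
    (hF : ∀ y ∈ s, AnalyticAt ℂ F y) (hreal : ∀ y ∈ s, (F y).im = 0) :
    ∀ y ∈ s, 0 < (iteratedDeriv 3 F y).re := by
  intro y hy
  have hschwarzian := three_mul_sq_lt_of_mapsTo_upperHalfPlaneSet hd hmaps hsurj (hF y hy)
    (hreal y hy) (iteratedDeriv_im_eq_zero hs hF hreal 2 y hy)
  have hpos := (deriv_pos_of_mapsTo_upperHalfPlaneSet hmaps (hF y hy) (hreal y hy)).1
  exact pos_of_mul_pos_right (lt_of_le_of_lt (by positivity) hschwarzian) (by positivity)

lemma strictMonoOn_re_iteratedDeriv {F : ℂ → ℂ} {s : Set ℝ} {n : ℕ} (hs : Convex ℝ s)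
    (hF : ∀ y ∈ s, AnalyticAt ℂ F y) (hpos : ∀ y ∈ s, 0 < (iteratedDeriv (n + 1) F y).re) :
    StrictMonoOn (fun y : ℝ => (iteratedDeriv n F y).re) s := by
  have hderiv := fun y hy => hasDerivAt_re_iteratedDeriv (hF y hy) n
  refine strictMonoOn_of_deriv_pos hs (HasDerivAt.continuousOn hderiv) fun y hy => ?_
  rw [(hderiv y (interior_subset hy)).deriv]
  exact hpos y (interior_subset hy)

end RealBoundaryValues

section Band

variable {P : ℝ[X]} {Θ : ℂ → ℂ} {a lm ln : ℝ}

lemma cos_ne_zero_of_im_pos {z : ℂ} (hz : z ∈ ℍₒ) : Complex.cos z ≠ 0 := by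
  intro h
  obtain ⟨k, rfl⟩ := Complex.cos_eq_zero_iff.1 h
  have hreal : (2 * (k : ℂ) + 1) * Real.pi / 2 = ((2 * k + 1) * Real.pi / 2 : ℝ) := by
    push_cast
    rfl
  exact ne_ofReal_of_mem_upperHalfPlaneSet hz _ hreal

lemma splits_of_two_mul_cos_eq (ha : 0 < a) (hmaps : MapsTo Θ ℍₒ ℍₒ)
    (hcos : ∀ z ∈ ℍₒ, 2 * Complex.cos (a * Θ z) = aeval z P) : P.Splits := by
  refine splits_of_forall_aeval_ne_zero fun z hz => ?_
  rw [← hcos z hz]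
  refine mul_ne_zero two_ne_zero (cos_ne_zero_of_im_pos ?_)
  rw [mem_ofPred_eq, Complex.im_ofReal_mul]
  exact mul_pos ha (hmaps hz)

lemma eval_eq_two_mul_cos {y : ℝ} (hcos : ∀ z ∈ ℍₒ, 2 * Complex.cos (a * Θ z) = aeval z P)
    (hΘ : ContinuousAt Θ y) (hy : (Θ y).im = 0) : P.eval y = 2 * Real.cos (a * (Θ y).re) := by
  have hcont : ContinuousAt (fun z => 2 * Complex.cos (a * Θ z)) y := by fun_prop
  have hboundary := eq_of_eqOn_upperHalfPlaneSet hcont P.continuous_aeval.continuousAt hcos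
  have hreal : Θ y = (Θ y).re := Complex.ext rfl hy
  rw [hreal, ← Complex.coe_algebraMap, aeval_algebraMap_apply_eq_algebraMap_eval,
    Complex.coe_algebraMap] at hboundary
  exact_mod_cast hboundary.symm

lemma sq_eval_derivative_eq {θ : ℝ → ℝ} {θ' y : ℝ} (hθ : HasDerivAt θ θ' y)
    (hP : P.eval =ᶠ[𝓝 y] fun t => 2 * Real.cos (a * θ t)) :
    P.derivative.eval y ^ 2 = a ^ 2 * (4 - P.eval y ^ 2) * θ' ^ 2 := by
  have hcos : HasDerivAt P.eval (2 * (-Real.sin (a * θ y) * (a * θ'))) y :=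
    (((hθ.const_mul a).cos).const_mul 2).congr_of_eventuallyEq hP
  have hPy : P.eval y = 2 * Real.cos (a * θ y) := hP.self_of_nhds
  rw [(P.hasDerivAt y).unique hcos, hPy]
  linear_combination 4 * a ^ 2 * θ' ^ 2 * Real.sin_sq (a * θ y)

/-- Rolle's theorem for `1 / u ^ 2`, extended by zero to the endpoints. -/
lemma exists_deriv_eq_zero_of_tendsto_inv_sq {u u' : ℝ → ℝ} (hlt : lm < ln)
    (hu : ∀ y ∈ Ioo lm ln, HasDerivAt u (u' y) y) (hne : ∀ y ∈ Ioo lm ln, u y ≠ 0)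
    (hleft : Tendsto (fun y => (u y ^ 2)⁻¹) (𝓝[>] lm) (𝓝 0))
    (hright : Tendsto (fun y => (u y ^ 2)⁻¹) (𝓝[<] ln) (𝓝 0)) :
    ∃ x ∈ Ioo lm ln, u' x = 0 := by
  obtain ⟨x, hx, hx0⟩ := exists_hasDerivAt_eq_zero' hlt hleft hright fun y hy =>
    ((hu y hy).fun_pow 2).fun_inv (pow_ne_zero 2 (hne y hy))
  refine ⟨x, hx, ?_⟩
  simpa [hne x hx] using hx0

lemma tendsto_inv_sq_of_eval_eq_two_mul_cos (hP : P.Splits) {θ θ' : ℝ → ℝ} {e : ℝ}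
    {l l' : Filter ℝ} [l.NeBot] [l'.NeBot] (hl : l ≤ 𝓝 e) (hl' : l' ≤ 𝓝 e)
    (hθ : ∀ᶠ y in l, HasDerivAt θ (θ' y) y)
    (hcos : ∀ᶠ y in l, P.eval =ᶠ[𝓝 y] fun t => 2 * Real.cos (a * θ t))
    (hout : ∀ᶠ y in l', 2 < |P.eval y|) : Tendsto (fun y => (θ' y ^ 2)⁻¹) l (𝓝 0) := by
  have hin : ∀ᶠ y in l, |P.eval y| ≤ 2 := by
    filter_upwards [hcos] with y hy
    have hPy : P.eval y = 2 * Real.cos (a * θ y) := hy.self_of_nhds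
    rw [hPy, abs_mul, abs_two]
    linarith [Real.abs_cos_le_one (a * θ y)]
  obtain ⟨hPe, hP'e⟩ := abs_eval_eq_and_eval_derivative_ne_zero hP two_pos hl hl' hin hout
  have hPe_sq : P.eval e ^ 2 = 4 := by rw [← sq_abs, hPe]; norm_num
  refine tendsto_inv_sq_of_sq_derivative_eq hl hPe_sq hP'e (c := a ^ 2) ?_
  filter_upwards [hθ, hcos] with y using sq_eval_derivative_eq

lemma exists_re_iteratedDeriv_two_eq_zero (hlt : lm < ln) (hP : P.Splits)
    (hcos : ∀ z ∈ ℍₒ, 2 * Complex.cos (a * Θ z) = aeval z P)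
    (hana : ∀ y ∈ Ioo lm ln, AnalyticAt ℂ Θ (y : ℂ)) (hreal : ∀ y ∈ Ioo lm ln, (Θ y).im = 0)
    (hΘ' : ∀ y ∈ Ioo lm ln, (deriv Θ y).re ≠ 0) (hleft : ∀ᶠ y in 𝓝[<] lm, 2 < |P.eval y|)
    (hright : ∀ᶠ y in 𝓝[>] ln, 2 < |P.eval y|) :
    ∃ x ∈ Ioo lm ln, (iteratedDeriv 2 Θ x).re = 0 := by
  have hθ : ∀ y ∈ Ioo lm ln, HasDerivAt (fun t : ℝ => (Θ t).re) (deriv Θ y).re y := fun y hy =>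
    (hana y hy).differentiableAt.hasDerivAt.real_of_complex
  have hcosθ : ∀ y ∈ Ioo lm ln, P.eval =ᶠ[𝓝 y] fun t => 2 * Real.cos (a * (Θ t).re) := by
    intro y hy
    filter_upwards [Ioo_mem_nhds hy.1 hy.2] with t ht
    exact eval_eq_two_mul_cos hcos (hana t ht).continuousAt (hreal t ht)
  refine exists_deriv_eq_zero_of_tendsto_inv_sq hlt (u := fun y => (deriv Θ y).re) ?_ hΘ' ?_ ?_
  · simpa only [iteratedDeriv_one] using fun y hy => hasDerivAt_re_iteratedDeriv (hana y hy) 1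
  · have hmem := Ioo_mem_nhdsGT hlt
    exact tendsto_inv_sq_of_eval_eq_two_mul_cos hP nhdsWithin_le_nhds nhdsWithin_le_nhds
      (mem_of_superset hmem hθ) (mem_of_superset hmem hcosθ) hleft
  · have hmem := Ioo_mem_nhdsLT hlt
    exact tendsto_inv_sq_of_eval_eq_two_mul_cos hP nhdsWithin_le_nhds nhdsWithin_le_nhds
      (mem_of_superset hmem hθ) (mem_of_superset hmem hcosθ) hright

end Band

/-- **Unique inflection point of `Θ` in each band** (part of Lemma 2.1).
If `[λm, λn]` is a connected component of `Σ = σ(H_V)` and `Θ̃` is an analytic extension of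
the Marchenko–Ostrovski mapping through `(λm, λn)`, real on `(λm, λn)`, then `Θ̃''` has a
unique zero `x*` in `(λm, λn)`, and `Θ̃'''(x*) ≠ 0`. -/
theorem MO_second_derivative_unique_zero
    (p : ℕ) (hp : 1 ≤ p) (V : ℤ → ℝ) (hV : ∀ n : ℤ, V (n + p) = V n)
    (H : lp (fun _ : ℤ => ℂ) 2 →L[ℂ] lp (fun _ : ℤ => ℂ) 2)
    (hH : ∀ ψ : lp (fun _ : ℤ => ℂ) 2, ∀ n : ℤ,
      (H ψ : ℤ → ℂ) n = ψ (n - 1) + ψ (n + 1) + (V n : ℂ) * ψ n)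
    (lm ln : ℝ) (hlt : lm < ln)
    (hsub : ∀ y : ℝ, y ∈ Set.Icc lm ln → (y : ℂ) ∈ spectrum ℂ H)
    (hgap : ∃ ε > 0, ∀ y : ℝ,
      y ∈ Set.Ioo (lm - ε) lm ∪ Set.Ioo ln (ln + ε) → (y : ℂ) ∉ spectrum ℂ H)
    (U : Set ℂ) (hU : IsOpen U) (hUsub : ∀ y : ℝ, y ∈ Set.Ioo lm ln → (y : ℂ) ∈ U)
    (Θ : ℂ → ℂ)
    (hana : AnalyticOnNhd ℂ Θ ({z : ℂ | 0 < z.im} ∪ U))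
    (hmaps : ∀ z : ℂ, 0 < z.im → 0 < (Θ z).im)
    (hre : ∀ z : ℂ, 0 < z.im → (Θ z).re ∈ Set.Icc (-Real.pi) 0)
    (hdisc : ∀ z : ℂ, 0 < z.im →
      2 * Complex.cos ((p : ℂ) * Θ z) = floquetDiscriminant p V z)
    (hreal : ∀ y : ℝ, y ∈ Set.Ioo lm ln → (Θ (y : ℂ)).im = 0) :
    ∃ x : ℝ, x ∈ Set.Ioo lm ln ∧ iteratedDeriv 2 Θ (x : ℂ) = 0
      ∧ iteratedDeriv 3 Θ (x : ℂ) ≠ 0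
      ∧ ∀ y : ℝ, y ∈ Set.Ioo lm ln → iteratedDeriv 2 Θ (y : ℂ) = 0 → y = x := by
  have hpR : (0 : ℝ) < p := Nat.cast_pos.2 hp
  have hd : DifferentiableOn ℂ Θ ℍₒ := (hana.mono subset_union_left).differentiableOn
  have hband : ∀ y ∈ Ioo lm ln, AnalyticAt ℂ Θ (y : ℂ) := fun y hy => hana y (.inr (hUsub y hy))
  have hΘ' : ∀ y ∈ Ioo lm ln, (deriv Θ y).re ≠ 0 := fun y hy =>
    (deriv_pos_of_mapsTo_upperHalfPlaneSet hmaps (hband y hy) (hreal y hy)).1.ne'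
  have hsurj : ¬ SurjOn Θ ℍₒ ℍₒ := not_surjOn_of_re_nonpos fun z hz => (hre z hz).2
  obtain ⟨P, hP⟩ := exists_polynomial_floquetDiscriminant_eq p V
  have hcos : ∀ z ∈ ℍₒ, 2 * Complex.cos ((p : ℝ) * Θ z) = aeval z P := fun z hz => by
    rw [← hP, ← hdisc z hz, Complex.ofReal_natCast]
  obtain ⟨ε, hε, hgap⟩ := hgap
  have hout : ∀ y ∈ Ioo (lm - ε) lm ∪ Ioo ln (ln + ε), 2 < |P.eval y| := fun y hy =>
    two_lt_abs_eval_of_notMem_spectrum hH (Nat.one_le_iff_ne_zero.1 hp) hV hP (hgap y hy)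
  obtain ⟨x, hx, hx₂⟩ := exists_re_iteratedDeriv_two_eq_zero hlt
    (splits_of_two_mul_cos_eq hpR hmaps hcos) hcos hband hreal hΘ'
    (mem_of_superset (Ioo_mem_nhdsLT (by linarith)) fun y hy => hout y (.inl hy))
    (mem_of_superset (Ioo_mem_nhdsGT (by linarith)) fun y hy => hout y (.inr hy))
  have hpos := re_iteratedDeriv_three_pos hd hmaps hsurj isOpen_Ioo hband hreal
  refine ⟨x, hx, Complex.ext hx₂ (iteratedDeriv_im_eq_zero isOpen_Ioo hband hreal 2 x hx),
    fun hx₃ => (hpos x hx).ne' (by rw [hx₃, Complex.zero_re]), fun y hy hy₂ => ?_⟩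
  refine (strictMonoOn_re_iteratedDeriv (convex_Ioo lm ln) hband hpos).injOn hy hx ?_
  simp only [hx₂, hy₂, Complex.zero_re]
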